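/- For any x, v ∈ ℝ³ with x ≠ 0, setting H = |v|² + q/|x| and L = x × v, the norm of x is recovered from the conserved quantities and the radial momentum x·v by the formula |x| = ( q + √( q² + 4H|L|² + 4H(x·v)² ) ) / (2H). -/

import Mathlib

/-!
By Lagrange's identity `|x × v|² + (x·v)² = |x|²|v|²`, and `H|x| = |x||v|² + q` by definition of
the energy. Hence the radicand is `q² + 4H|x|·(H|x| - q) = (2H|x| - q)²`, and since
`2H|x| - q = 2|x||v|² + q > 0`, the square root is exactly `2H|x| - q`. Dividing by `2H > 0`
gives `|x|`.
-/

open scoped RealInnerProductSpace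

noncomputable section

/-- Euclidean three-space. -/
abbrev R3 : Type := EuclideanSpace ℝ (Fin 3)

/-- The cross product on `ℝ³`. -/
def cross3 (x y : R3) : R3 :=
  (WithLp.equiv 2 (Fin 3 → ℝ)).symm
    ![x 1 * y 2 - x 2 * y 1, x 2 * y 0 - x 0 * y 2, x 0 * y 1 - x 1 * y 0]

/-- The energy `H(x,v) = |v|² + q/|x|` of the repulsive Kepler problem. -/
def keplerH (q : ℝ) (x v : R3) : ℝ := ‖v‖ ^ 2 + q / ‖x‖

/-- Lagrange's identity for the cross product. -/
lemma norm_cross3_sq_add_inner_sq (x v : R3) :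
    ‖cross3 x v‖ ^ 2 + (⟪x, v⟫ : ℝ) ^ 2 = ‖x‖ ^ 2 * ‖v‖ ^ 2 := by
  simp only [EuclideanSpace.real_norm_sq_eq, PiLp.inner_apply, Fin.sum_univ_three, cross3]
  simp
  ring

/-- For `x ≠ 0`, with `H = |v|² + q/|x|` and `L = x × v`, the norm of `x` is recovered from
the conserved quantities and the radial momentum `x·v`:
`|x| = (q + √(q² + 4H|L|² + 4H(x·v)²)) / (2H)`. -/
theorem kepler_norm_from_conserved (q : ℝ) (hq : 0 < q)
    (x v : R3) (hx : x ≠ 0) :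
    ‖x‖ = (q + Real.sqrt (q ^ 2 + 4 * keplerH q x v * ‖cross3 x v‖ ^ 2 +
        4 * keplerH q x v * (⟪x, v⟫ : ℝ) ^ 2)) / (2 * keplerH q x v) := by
  have hr : 0 < ‖x‖ := norm_pos_iff.mpr hx
  have hH : 0 < keplerH q x v := by unfold keplerH; positivity
  have hHr : keplerH q x v * ‖x‖ = ‖x‖ * ‖v‖ ^ 2 + q := by
    unfold keplerH
    field_simp
  have hrad : q ^ 2 + 4 * keplerH q x v * ‖cross3 x v‖ ^ 2 +
      4 * keplerH q x v * (⟪x, v⟫ : ℝ) ^ 2 = (2 * ‖x‖ * ‖v‖ ^ 2 + q) ^ 2 := by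
    linear_combination 4 * keplerH q x v * norm_cross3_sq_add_inner_sq x v +
      4 * ‖x‖ * ‖v‖ ^ 2 * hHr
  rw [hrad, Real.sqrt_sq (by positivity), eq_div_iff (by positivity)]
  linear_combination 2 * hHr
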